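/- For every 1 < p < ∞ there exists a continuous function f on ℝ², 1-periodic in both variables, such that f ∈ H_p^{(2)} but f ∉ V_p[V_p]. (One such function is f(x,y) = Σ_{n=1}^∞ 2^{−n/p} g_n(x) φ(2ⁿy), where φ(x) = dist(x,ℤ) and g_n is the 1-periodic extension of the function equal to φ(2ⁿx − 1) for x ∈ [0,1] with 2ⁿx − 1 ∈ [0,1] and 0 elsewhere on [0,1].) Consequently, H_p^{(2)} ⊄ V_p[V_p] for every 1 < p < ∞. -/

import Mathlib

open MeasureTheory Filter Set
open scoped ENNReal

noncomputable section

/-- A function of two real variables that is 1-periodic in each variable. -/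
def BiPeriodic (f : ℝ → ℝ → ℝ) : Prop :=
  (∀ x y, f (x + 1) y = f x y) ∧ (∀ x y, f x (y + 1) = f x y)

/-- A 1-periodic function of one real variable. -/
def Periodic1 (g : ℝ → ℝ) : Prop := ∀ x, g (x + 1) = g x

/-- The `L^p` norm of a function over `[0,1]^2` (as a value in `[0,∞]`). -/
noncomputable def lpNorm2 (p : ℝ) (f : ℝ → ℝ → ℝ) : ℝ≥0∞ :=
  (∫⁻ x in Set.Icc (0:ℝ) 1, ∫⁻ y in Set.Icc (0:ℝ) 1,
      ENNReal.ofReal (|f x y| ^ p)) ^ (1 / p)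

/-- The `L^p` norm of a function over `[0,1]` (as a value in `[0,∞]`). -/
noncomputable def lpNorm1 (p : ℝ) (g : ℝ → ℝ) : ℝ≥0∞ :=
  (∫⁻ x in Set.Icc (0:ℝ) 1, ENNReal.ofReal (|g x| ^ p)) ^ (1 / p)

/-- Membership in `L^p([0,1]^2)`: measurable, 1-periodic in each variable,
finite `L^p` norm. -/
def MemLp2 (p : ℝ) (f : ℝ → ℝ → ℝ) : Prop :=
  Measurable (Function.uncurry f) ∧ BiPeriodic f ∧ lpNorm2 p f < ⊤

/-- Membership in `L^p([0,1])` for 1-periodic functions of one variable. -/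
def MemLp1 (p : ℝ) (g : ℝ → ℝ) : Prop :=
  Measurable g ∧ Periodic1 g ∧ lpNorm1 p g < ⊤

/-- The (total) `L^p` modulus of continuity `ω(f;δ)_p` of a bivariate function. -/
noncomputable def modulus2 (p : ℝ) (f : ℝ → ℝ → ℝ) (δ : ℝ) : ℝ≥0∞ :=
  ⨆ (h : ℝ × ℝ) (_ : Real.sqrt (h.1 ^ 2 + h.2 ^ 2) ≤ δ),
    lpNorm2 p (fun x y => f (x + h.1) (y + h.2) - f x y)

/-- The `L^p` modulus of continuity `ω(g;δ)_p` of a univariate function. -/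
noncomputable def modulus1 (p : ℝ) (g : ℝ → ℝ) (δ : ℝ) : ℝ≥0∞ :=
  ⨆ (h : ℝ) (_ : h ∈ Set.Icc 0 δ), lpNorm1 p (fun x => g (x + h) - g x)

/-- The mixed `L^p` modulus of continuity `ω(f;u,v)_p`. -/
noncomputable def mixedModulus (p : ℝ) (f : ℝ → ℝ → ℝ) (u v : ℝ) : ℝ≥0∞ :=
  ⨆ (s : ℝ) (_ : s ∈ Set.Icc 0 u) (t : ℝ) (_ : t ∈ Set.Icc 0 v),
    lpNorm2 p (fun x y => f (x + s) (y + t) - f (x + s) y - f x (y + t) + f x y)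

/-- `J_p(f) = ∫₀¹ t^{-1/p} ω(f;t)_p dt/t`. -/
noncomputable def Jp (p : ℝ) (f : ℝ → ℝ → ℝ) : ℝ≥0∞ :=
  ∫⁻ t in Set.Ioc (0:ℝ) 1, ENNReal.ofReal (t ^ (-(1/p)) / t) * modulus2 p f t

/-- `K_p(f) = ∫₀¹ t^{-1/p} [ω(f;t,1)_p + ω(f;1,t)_p] dt/t`. -/
noncomputable def Kp (p : ℝ) (f : ℝ → ℝ → ℝ) : ℝ≥0∞ :=
  ∫⁻ t in Set.Ioc (0:ℝ) 1,
    ENNReal.ofReal (t ^ (-(1/p)) / t) * (mixedModulus p f t 1 + mixedModulus p f 1 t)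

/-- `I_p(f) = ∫₀¹∫₀¹ (uv)^{-1/p} ω(f;u,v)_p (du/u)(dv/v)`. -/
noncomputable def Ip (p : ℝ) (f : ℝ → ℝ → ℝ) : ℝ≥0∞ :=
  ∫⁻ u in Set.Ioc (0:ℝ) 1, ∫⁻ v in Set.Ioc (0:ℝ) 1,
    ENNReal.ofReal ((u * v) ^ (-(1/p)) / (u * v)) * mixedModulus p f u v

/-- The essential supremum norm of `f` over `[0,1]^2`. -/
noncomputable def supNorm2 (f : ℝ → ℝ → ℝ) : ℝ≥0∞ :=
  essSup (fun z : ℝ × ℝ => ENNReal.ofReal |f z.1 z.2|)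
    (volume.restrict ((Set.Icc (0:ℝ) 1) ×ˢ (Set.Icc (0:ℝ) 1)))

/-- The Wiener `p`-variation of a 1-periodic function `g`, as a value in `[0,∞]`:
the supremum over partitions `x₀ < x₁ < ... < xₙ = x₀ + 1` of
`(∑ |g(x_{k+1}) - g(x_k)|^p)^{1/p}`. -/
noncomputable def vp (p : ℝ) (g : ℝ → ℝ) : ℝ≥0∞ :=
  ⨆ (n : ℕ) (x : ℕ → ℝ) (_ : ∀ i < n, x i < x (i + 1)) (_ : x n = x 0 + 1),
    ENNReal.ofReal ((∑ k ∈ Finset.range n, |g (x (k + 1)) - g (x k)| ^ p) ^ (1 / p))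

/-- The Hardy–Vitali type total `p`-variation of a bivariate function,
as a value in `[0,∞]`: the supremum over nets of
`(∑∑ |Δf(x_i,y_j)|^p)^{1/p}`. -/
noncomputable def vp2 (p : ℝ) (f : ℝ → ℝ → ℝ) : ℝ≥0∞ :=
  ⨆ (m : ℕ) (n : ℕ) (x : ℕ → ℝ) (y : ℕ → ℝ)
    (_ : ∀ i < m, x i < x (i + 1)) (_ : x m = x 0 + 1)
    (_ : ∀ j < n, y j < y (j + 1)) (_ : y n = y 0 + 1),
    ENNReal.ofReal ((∑ i ∈ Finset.range m, ∑ j ∈ Finset.range n,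
      |f (x (i + 1)) (y (j + 1)) - f (x (i + 1)) (y j)
        - f (x i) (y (j + 1)) + f (x i) (y j)| ^ p) ^ (1 / p))

/-- Membership in the Hardy class `H_p^{(2)}`: finite Vitali `p`-variation and
all linear sections of bounded `p`-variation. -/
def MemHp2 (p : ℝ) (f : ℝ → ℝ → ℝ) : Prop :=
  vp2 p f < ⊤ ∧ (∀ x, vp p (fun y => f x y) < ⊤) ∧ (∀ y, vp p (fun x => f x y) < ⊤)

/-- Membership in the mixed norm class `V_p[V_p]`: all sections have bounded
`p`-variation and the functions `x ↦ v_p(f_x)`, `y ↦ v_p(f_y)` are themselves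
of bounded `p`-variation. -/
def MemVpVp (p : ℝ) (f : ℝ → ℝ → ℝ) : Prop :=
  (∀ x, vp p (fun y => f x y) < ⊤) ∧ (∀ y, vp p (fun x => f x y) < ⊤) ∧
  vp p (fun x => (vp p (fun y => f x y)).toReal) < ⊤ ∧
  vp p (fun y => (vp p (fun x => f x y)).toReal) < ⊤

/-- `W_p(f) = v_p(φ_p[f]) + v_p(ψ_p[f])`, where `φ_p[f](x) = v_p(f_x)` and
`ψ_p[f](y) = v_p(f_y)`. -/
noncomputable def Wp (p : ℝ) (f : ℝ → ℝ → ℝ) : ℝ≥0∞ :=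
  vp p (fun x => (vp p (fun y => f x y)).toReal)
    + vp p (fun y => (vp p (fun x => f x y)).toReal)

/-- Membership in `L^p_0([0,1]^2)`: membership in `L^p([0,1]^2)` together with
vanishing of the linear mean values `∫₀¹ f(x,t) dt` and `∫₀¹ f(t,y) dt` for a.e.
`x` resp. `y`. -/
def MemLp20 (p : ℝ) (f : ℝ → ℝ → ℝ) : Prop :=
  MemLp2 p f ∧ (∀ᵐ x : ℝ ∂volume, ∫ t in (0:ℝ)..1, f x t = 0) ∧
    (∀ᵐ y : ℝ ∂volume, ∫ t in (0:ℝ)..1, f t y = 0)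

/-- `T` is a trigonometric polynomial of degree `(n,m)` in two variables. -/
def IsTrigPoly2 (n m : ℕ) (T : ℝ → ℝ → ℝ) : Prop :=
  ∃ a b c d : ℕ → ℕ → ℝ, ∀ x y : ℝ,
    T x y = ∑ j ∈ Finset.range (n + 1), ∑ k ∈ Finset.range (m + 1),
      (a j k * Real.cos (2 * Real.pi * j * x) * Real.cos (2 * Real.pi * k * y)
        + b j k * Real.cos (2 * Real.pi * j * x) * Real.sin (2 * Real.pi * k * y)
        + c j k * Real.sin (2 * Real.pi * j * x) * Real.cos (2 * Real.pi * k * y)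
        + d j k * Real.sin (2 * Real.pi * j * x) * Real.sin (2 * Real.pi * k * y))

end

noncomputable section

def clp (t : ℝ) : ℝ := max 0 (min 1 t)

theorem clp_nonneg (t : ℝ) : 0 ≤ clp t := le_max_left _ _
theorem clp_le_one (t : ℝ) : clp t ≤ 1 := max_le zero_le_one (min_le_left _ _)
theorem clp_mono : Monotone clp := fun a b h => by
  unfold clp; gcongr
theorem clp_of_nonpos {t : ℝ} (h : t ≤ 0) : clp t = 0 := by
  unfold clp; rw [min_eq_right (by linarith), max_eq_left h]
theorem clp_of_one_le {t : ℝ} (h : 1 ≤ t) : clp t = 1 := by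
  unfold clp; rw [min_eq_left h, max_eq_right zero_le_one]
theorem clp_cont : Continuous clp := by unfold clp; fun_prop

/-- the bump on (1,2) -/
def bmp (s : ℝ) : ℝ := clp (2 * s - 2) - clp (2 * s - 3)

theorem bmp_nonneg (s : ℝ) : 0 ≤ bmp s := sub_nonneg.2 (clp_mono (by linarith))
theorem bmp_le_one (s : ℝ) : bmp s ≤ 1 := by
  unfold bmp; linarith [clp_le_one (2 * s - 2), clp_nonneg (2 * s - 3)]
theorem bmp_le (s : ℝ) : bmp (2 * s) ≤ clp (2 * (2 * s) - 2) - clp (2 * s - 2) := by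
  unfold bmp
  rcases le_or_gt s 1 with h | h
  · rw [clp_of_nonpos (t := 2 * s - 2) (by linarith)]
    linarith [clp_nonneg (2 * (2 * s) - 3)]
  · linarith [clp_mono (show 2 * s - 2 ≤ 2 * (2 * s) - 3 by linarith)]
theorem bmp_of_le {s : ℝ} (h : s ≤ 1) : bmp s = 0 := by
  unfold bmp; rw [clp_of_nonpos (by linarith), clp_of_nonpos (by linarith), sub_zero]
theorem bmp_of_ge {s : ℝ} (h : 2 ≤ s) : bmp s = 0 := by
  unfold bmp; rw [clp_of_one_le (by linarith), clp_of_one_le (by linarith), sub_self]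
theorem bmp_peak : bmp (3 / 2) = 1 := by
  unfold bmp; rw [clp_of_one_le (by norm_num), clp_of_nonpos (by norm_num), sub_zero]

def gg (n : ℕ) (x : ℝ) : ℝ := bmp (2 ^ (n + 1) * Int.fract x)

theorem gg_nonneg (n : ℕ) (x : ℝ) : 0 ≤ gg n x := bmp_nonneg _
theorem gg_le_one (n : ℕ) (x : ℝ) : gg n x ≤ 1 := bmp_le_one _

theorem gg_sum (N : ℕ) (x : ℝ) : ∑ n ∈ Finset.range N, gg n x ≤ 1 := by
  have : ∀ n, gg n x ≤ (fun n : ℕ => clp (2 * (2 ^ n * Int.fract x) - 2)) (n + 1)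
      - (fun n : ℕ => clp (2 * (2 ^ n * Int.fract x) - 2)) n := by
    intro n
    have := bmp_le (2 ^ n * Int.fract x)
    have e : 2 ^ (n + 1) * Int.fract x = 2 * (2 ^ n * Int.fract x) := by ring
    simp only [gg, e]
    exact this
  refine (Finset.sum_le_sum fun n _ => this n).trans ?_
  rw [Finset.sum_range_sub (fun n : ℕ => clp (2 * (2 ^ n * Int.fract x) - 2))]
  linarith [clp_le_one (2 * (2 ^ N * Int.fract x) - 2), clp_nonneg (2 * (2 ^ 0 * Int.fract x) - 2)]

theorem gg_periodic (n : ℕ) (x : ℝ) : gg n (x + 1) = gg n x := by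
  unfold gg; rw [Int.fract_add_one]

theorem gg_cont (n : ℕ) : Continuous (gg n) := by
  have h := ContinuousOn.comp_fract'' (f := fun t : ℝ => bmp (2 ^ (n + 1) * t))
    (by
      have : Continuous (fun t : ℝ => bmp (2 ^ (n + 1) * t)) := by
        unfold bmp
        exact (clp_cont.comp (by fun_prop)).sub (clp_cont.comp (by fun_prop))
      exact this.continuousOn)
    (by
      rw [bmp_of_le (by norm_num), bmp_of_ge]
      have : (1 : ℝ) ≤ 2 ^ n := one_le_pow₀ (by norm_num)
      rw [pow_succ]; linarith)
  exact h

/-- staircase -/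
def stc (F : ℝ → ℝ) (x : ℝ) : ℝ := ⌊x⌋ + F (Int.fract x)

theorem stc_mono (F : ℝ → ℝ) (hF : Monotone F) (h0 : ∀ t, 0 ≤ F t) (h1 : ∀ t, F t ≤ 1) :
    Monotone (stc F) := by
  intro x y h
  unfold stc
  rcases (Int.floor_mono h).eq_or_lt with e | e
  · have : Int.fract x ≤ Int.fract y := by unfold Int.fract; rw [e]; linarith
    rw [e]; linarith [hF this]
  · have : (⌊x⌋ : ℝ) + 1 ≤ ⌊y⌋ := by exact_mod_cast e
    linarith [h0 (Int.fract y), h1 (Int.fract x)]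

theorem stc_add (F : ℝ → ℝ) (x : ℝ) : stc F (x + 1) = stc F x + 1 := by
  unfold stc; rw [Int.fract_add_one, Int.floor_add_one]; push_cast; ring

theorem gg_var (n m : ℕ) (x : ℕ → ℝ) (hx : ∀ i < m, x i < x (i + 1)) (hm : x m = x 0 + 1) :
    ∑ i ∈ Finset.range m, |gg n (x (i + 1)) - gg n (x i)| ≤ 2 := by
  set F : ℝ → ℝ := fun t => clp (2 * (2 ^ (n + 1) * t) - 2) with hF
  set G : ℝ → ℝ := fun t => clp (2 * (2 ^ (n + 1) * t) - 3) with hG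
  have hFm : Monotone (stc F) := stc_mono F (fun a b h => clp_mono (by gcongr))
    (fun _ => clp_nonneg _) (fun _ => clp_le_one _)
  have hGm : Monotone (stc G) := stc_mono G (fun a b h => clp_mono (by gcongr))
    (fun _ => clp_nonneg _) (fun _ => clp_le_one _)
  have e : ∀ t, gg n t = stc F t - stc G t := by
    intro t; simp only [gg, bmp, stc, hF, hG]; ring
  have : ∀ i ∈ Finset.range m, |gg n (x (i + 1)) - gg n (x i)| ≤
      (stc F (x (i + 1)) - stc F (x i)) + (stc G (x (i + 1)) - stc G (x i)) := by
    intro i hi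
    have hi := (hx i (Finset.mem_range.1 hi)).le
    have h1 := hFm hi
    have h2 := hGm hi
    rw [e, e, abs_le]; constructor <;> linarith
  refine (Finset.sum_le_sum this).trans ?_
  rw [Finset.sum_add_distrib, Finset.sum_range_sub (fun i => stc F (x i)),
    Finset.sum_range_sub (fun i => stc G (x i)), hm, stc_add, stc_add]
  linarith

theorem gg_peak (k n : ℕ) : gg n (3 / 4 / 2 ^ k) = if n = k then 1 else 0 := by
  have hk : (1 : ℝ) ≤ 2 ^ k := one_le_pow₀ (by norm_num)
  have hf : Int.fract ((3 : ℝ) / 4 / 2 ^ k) = 3 / 4 / 2 ^ k := by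
    rw [Int.fract_eq_self]
    refine ⟨by positivity, ?_⟩
    rw [div_lt_one (by positivity)]; linarith
  unfold gg; rw [hf]
  rcases lt_trichotomy n k with h | h | h
  · rw [if_neg h.ne]
    apply bmp_of_le
    obtain ⟨d, rfl⟩ := Nat.exists_eq_add_of_lt h
    have h2 : (1 : ℝ) ≤ 2 ^ d := one_le_pow₀ (by norm_num)
    have : (2 : ℝ) ^ (n + 1) * (3 / 4 / 2 ^ (n + d + 1)) = 3 / 4 / 2 ^ d := by
      field_simp; ring
    rw [this, div_le_one (by positivity)]; linarith
  · subst h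
    rw [if_pos rfl, ← bmp_peak]; congr 1; field_simp; ring
  · rw [if_neg h.ne']
    apply bmp_of_ge
    obtain ⟨d, rfl⟩ := Nat.exists_eq_add_of_lt h
    have h2 : (1 : ℝ) ≤ 2 ^ d := one_le_pow₀ (by norm_num)
    have : (2 : ℝ) ^ (k + d + 1 + 1) * (3 / 4 / 2 ^ k) = 3 * 2 ^ d := by
      field_simp; ring
    rw [this]; linarith

theorem gg_zero (k n : ℕ) : gg n (1 / 2 / 2 ^ k) = 0 := by
  have hk : (1 : ℝ) ≤ 2 ^ k := one_le_pow₀ (by norm_num)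
  have hf : Int.fract ((1 : ℝ) / 2 / 2 ^ k) = 1 / 2 / 2 ^ k := by
    rw [Int.fract_eq_self]
    refine ⟨by positivity, ?_⟩
    rw [div_lt_one (by positivity)]; linarith
  unfold gg; rw [hf]
  rcases le_or_gt n k with h | h
  · apply bmp_of_le
    obtain ⟨d, rfl⟩ := Nat.exists_eq_add_of_le h
    have h2 : (1 : ℝ) ≤ 2 ^ d := one_le_pow₀ (by norm_num)
    have : (2 : ℝ) ^ (n + 1) * (1 / 2 / 2 ^ (n + d)) = 1 / 2 ^ d := by
      field_simp; ring
    rw [this, div_le_one (by positivity)]; linarith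
  · apply bmp_of_ge
    obtain ⟨d, rfl⟩ := Nat.exists_eq_add_of_lt h
    have h2 : (1 : ℝ) ≤ 2 ^ d := one_le_pow₀ (by norm_num)
    have : (2 : ℝ) ^ (k + d + 1 + 1) * (1 / 2 / 2 ^ k) = 2 * 2 ^ d := by
      field_simp; ring
    rw [this]; linarith

theorem dyadic_sum (p : ℝ) (hp : 1 < p) : ∃ A : ℝ, 0 ≤ A ∧ ∀ (N : ℕ) (d : ℝ), 0 < d →
    ∑ n ∈ Finset.range N, (1 / 2 : ℝ) ^ n * (min 1 (2 ^ n * d)) ^ p ≤ A * d := by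
  have h2 : (1 : ℝ) < 2 ^ (p - 1) := Real.one_lt_rpow (by norm_num) (by linarith)
  set B : ℝ := 1 / (2 ^ (p - 1) - 1) with hB
  have hB0 : 0 < B := by rw [hB]; apply one_div_pos.2; linarith
  have hB1 : B * 2 ^ (p - 1) = B + 1 := by
    have : (2 : ℝ) ^ (p - 1) - 1 ≠ 0 := by linarith
    rw [hB]; field_simp; ring
  have h2p : (2 : ℝ) ^ p = 2 ^ (p - 1) * 2 := by
    rw [Real.rpow_sub_one (by norm_num)]; field_simp
  have key : ∀ (N : ℕ) (d : ℝ), 0 < d →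
    ∑ n ∈ Finset.range N, (1 / 2 : ℝ) ^ n * (min 1 (2 ^ n * d)) ^ p
      ≤ if d < 1 then (2 * B + 4) * d - B * d ^ p else 2 := by
    intro N
    induction N with
    | zero =>
      intro d hd
      simp only [Finset.range_zero, Finset.sum_empty]
      split_ifs with h
      · have : d ^ p ≤ d := by
          simpa using Real.rpow_le_rpow_of_exponent_ge hd h.le hp.le
        nlinarith
      · norm_num
    | succ N ih =>
      intro d hd
      rw [Finset.sum_range_succ']
      have e : ∀ n, (1 / 2 : ℝ) ^ (n + 1) * (min 1 (2 ^ (n + 1) * d)) ^ p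
          = 1 / 2 * ((1 / 2 : ℝ) ^ n * (min 1 (2 ^ n * (2 * d))) ^ p) := by
        intro n
        rw [pow_succ, pow_succ, mul_assoc (2 ^ n) 2 d]; ring
      simp_rw [e]
      rw [← Finset.mul_sum]
      have := ih (2 * d) (by linarith)
      simp only [pow_zero, one_mul]
      split_ifs with h
      · rw [min_eq_right h.le]
        have hdp : d ^ p ≤ d := by
          simpa using Real.rpow_le_rpow_of_exponent_ge hd h.le hp.le
        split_ifs at this with h'
        · rw [Real.mul_rpow (by norm_num) hd.le, h2p] at this
          have e2 : B * (2 ^ (p - 1) * 2 * d ^ p) = 2 * (B + 1) * d ^ p := by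
            rw [← hB1]; ring
          rw [e2] at this
          linarith
        · have : (B + 1) * d ^ p ≤ (B + 1) * d := by gcongr
          nlinarith
      · rw [not_lt] at h
        rw [min_eq_left h, Real.one_rpow]
        rw [if_neg (by linarith)] at this
        linarith
  refine ⟨2 * B + 4, by linarith, fun N d hd => (key N d hd).trans ?_⟩
  split_ifs with h
  · have : 0 ≤ d ^ p := Real.rpow_nonneg hd.le _
    nlinarith
  · nlinarith

theorem key_holder (p : ℝ) (hp : 1 < p) (I J : Finset ℕ) (N : ℕ) (a b : ℕ → ℕ → ℝ) (V B : ℝ)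
    (hV : 0 ≤ V)
    (hA : ∀ i ∈ I, ∑ n ∈ Finset.range N, |a i n| ≤ 2)
    (hv : ∀ n, ∑ i ∈ I, |a i n| ≤ V)
    (hB : ∑ j ∈ J, ∑ n ∈ Finset.range N, |b j n| ^ p ≤ B) :
    ∑ i ∈ I, ∑ j ∈ J, |∑ n ∈ Finset.range N, a i n * b j n| ^ p ≤ 2 ^ (p - 1) * (V * B) := by
  have hp0 : 0 < p := by linarith
  have h1 : ∀ i ∈ I, ∀ j ∈ J, |∑ n ∈ Finset.range N, a i n * b j n| ^ p ≤
      2 ^ (p - 1) * ∑ n ∈ Finset.range N, |a i n| * |b j n| ^ p := by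
    intro i hi j _
    have hS : 0 ≤ ∑ n ∈ Finset.range N, |a i n| * |b j n| ^ p :=
      Finset.sum_nonneg fun n _ => mul_nonneg (abs_nonneg _) (Real.rpow_nonneg (abs_nonneg _) _)
    have hW : 0 ≤ ∑ n ∈ Finset.range N, |a i n| :=
      Finset.sum_nonneg fun n _ => abs_nonneg _
    have h := Real.inner_le_weight_mul_Lp_of_nonneg (Finset.range N) hp.le (fun n => |a i n|)
      (fun n => |b j n|) (fun n => abs_nonneg _) (fun n => abs_nonneg _)
    have h0 : |∑ n ∈ Finset.range N, a i n * b j n| ≤ ∑ n ∈ Finset.range N, |a i n| * |b j n| := by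
      refine (Finset.abs_sum_le_sum_abs _ _).trans (le_of_eq ?_)
      simp_rw [abs_mul]
    calc |∑ n ∈ Finset.range N, a i n * b j n| ^ p
        ≤ ((∑ n ∈ Finset.range N, |a i n|) ^ (1 - p⁻¹) *
          (∑ n ∈ Finset.range N, |a i n| * |b j n| ^ p) ^ p⁻¹) ^ p :=
          Real.rpow_le_rpow (abs_nonneg _) (h0.trans h) hp0.le
      _ = (∑ n ∈ Finset.range N, |a i n|) ^ (p - 1) *
          (∑ n ∈ Finset.range N, |a i n| * |b j n| ^ p) := by
          rw [Real.mul_rpow (Real.rpow_nonneg hW _) (Real.rpow_nonneg hS _), ← Real.rpow_mul hW,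
            ← Real.rpow_mul hS, inv_mul_cancel₀ hp0.ne', Real.rpow_one, sub_mul,
            inv_mul_cancel₀ hp0.ne', one_mul]
      _ ≤ _ := by
          exact mul_le_mul_of_nonneg_right
            (Real.rpow_le_rpow hW (hA i hi) (sub_nonneg.2 hp.le)) hS
  calc _ ≤ ∑ i ∈ I, ∑ j ∈ J, 2 ^ (p - 1) * ∑ n ∈ Finset.range N, |a i n| * |b j n| ^ p :=
        Finset.sum_le_sum fun i hi => Finset.sum_le_sum fun j hj => h1 i hi j hj
    _ = 2 ^ (p - 1) * ∑ j ∈ J, ∑ n ∈ Finset.range N, (∑ i ∈ I, |a i n|) * |b j n| ^ p := by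
        simp_rw [← Finset.mul_sum]
        congr 1
        rw [Finset.sum_comm]
        refine Finset.sum_congr rfl fun j _ => ?_
        rw [Finset.sum_comm]
        simp_rw [Finset.sum_mul]
    _ ≤ 2 ^ (p - 1) * ∑ j ∈ J, ∑ n ∈ Finset.range N, V * |b j n| ^ p := by
        gcongr with j _ n _
        exact hv n
    _ ≤ _ := by
        simp_rw [← Finset.mul_sum]
        gcongr

/-- passing to the limit in the previous lemma -/
theorem key_limit (p : ℝ) (hp : 1 < p) (I J : Finset ℕ) (a b : ℕ → ℕ → ℝ) (V B : ℝ)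
    (D : ℕ → ℕ → ℝ) (hV : 0 ≤ V)
    (hD : ∀ i j, HasSum (fun n => a i n * b j n) (D i j))
    (hA : ∀ N, ∀ i ∈ I, ∑ n ∈ Finset.range N, |a i n| ≤ 2)
    (hv : ∀ n, ∑ i ∈ I, |a i n| ≤ V)
    (hB : ∀ N, ∑ j ∈ J, ∑ n ∈ Finset.range N, |b j n| ^ p ≤ B) :
    ∑ i ∈ I, ∑ j ∈ J, |D i j| ^ p ≤ 2 ^ (p - 1) * (V * B) := by
  have ht : Tendsto (fun N => ∑ i ∈ I, ∑ j ∈ J, |∑ n ∈ Finset.range N, a i n * b j n| ^ p) atTop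
      (nhds (∑ i ∈ I, ∑ j ∈ J, |D i j| ^ p)) :=
    tendsto_finsetSum _ fun i _ => tendsto_finsetSum _ fun j _ =>
      ((hD i j).tendsto_sum_nat.abs).rpow_const (Or.inr (by linarith))
  exact le_of_tendsto' ht fun N => key_holder p hp I J N a b V B hV (hA N) hv (hB N)

def rr (p : ℝ) : ℝ := (1 / 2 : ℝ) ^ (1 / p)

def hh (p : ℝ) (n : ℕ) (y : ℝ) : ℝ := rr p ^ n * Real.cos (2 * Real.pi * (2 ^ n * y))

theorem rr_pos (p : ℝ) : 0 < rr p := Real.rpow_pos_of_pos (by norm_num) _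
theorem rr_lt_one (p : ℝ) (hp : 1 < p) : rr p < 1 :=
  Real.rpow_lt_one (by norm_num) (by norm_num) (by positivity)
theorem rr_pow (p : ℝ) (hp : 1 < p) (n : ℕ) : (rr p ^ n) ^ p = (1 / 2 : ℝ) ^ n := by
  have hp0 : p ≠ 0 := by linarith
  rw [← Real.rpow_natCast (rr p) n, ← Real.rpow_mul (rr_pos p).le, mul_comm (n : ℝ) p,
    Real.rpow_mul (rr_pos p).le, rr,
    ← Real.rpow_mul (show (0 : ℝ) ≤ 1 / 2 by norm_num) (1 / p) p, one_div_mul_cancel hp0,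
    Real.rpow_one, Real.rpow_natCast]

theorem hh_abs (p : ℝ) (n : ℕ) (y : ℝ) : |hh p n y| ≤ rr p ^ n := by
  have h : 0 < rr p ^ n := pow_pos (rr_pos p) n
  rw [hh, abs_mul, abs_of_pos h]
  exact mul_le_of_le_one_right h.le (Real.abs_cos_le_one _)

theorem hh_diff (p : ℝ) (n : ℕ) (y z : ℝ) (h : y < z) :
    |hh p n z - hh p n y| ≤ rr p ^ n * (2 * Real.pi * min 1 (2 ^ n * (z - y))) := by
  have hr : 0 < rr p ^ n := pow_pos (rr_pos p) n
  have hpi := Real.pi_gt_three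
  rw [hh, hh, ← mul_sub, abs_mul, abs_of_pos hr]
  gcongr
  rw [mul_min_of_nonneg _ _ (by positivity)]
  refine le_min ?_ ?_
  · have h1 := abs_le.1 (Real.abs_cos_le_one (2 * Real.pi * (2 ^ n * z)))
    have h2 := abs_le.1 (Real.abs_cos_le_one (2 * Real.pi * (2 ^ n * y)))
    rw [abs_le]; constructor <;> linarith
  · refine (Real.abs_cos_sub_cos_le _ _).trans (le_of_eq ?_)
    rw [← mul_sub, ← mul_sub, abs_of_nonneg]
    have : 0 ≤ z - y := by linarith
    positivity

theorem hh_var (p : ℝ) (hp : 1 < p) : ∃ C : ℝ, ∀ (N m : ℕ) (y : ℕ → ℝ),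
    (∀ j < m, y j < y (j + 1)) → y m = y 0 + 1 →
    ∑ j ∈ Finset.range m, ∑ n ∈ Finset.range N, |hh p n (y (j + 1)) - hh p n (y j)| ^ p ≤ C := by
  obtain ⟨A, hA0, hA⟩ := dyadic_sum p hp
  refine ⟨(2 * Real.pi) ^ p * A, fun N m y hy hm => ?_⟩
  have hpi := Real.pi_pos
  have h1 : ∀ j ∈ Finset.range m, ∑ n ∈ Finset.range N, |hh p n (y (j + 1)) - hh p n (y j)| ^ p
      ≤ (2 * Real.pi) ^ p * A * (y (j + 1) - y j) := by
    intro j hj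
    have hj := hy j (Finset.mem_range.1 hj)
    have hd : 0 < y (j + 1) - y j := by linarith
    rw [mul_assoc]
    refine le_trans ?_ (mul_le_mul_of_nonneg_left (hA N _ hd) (by positivity))
    rw [Finset.mul_sum]
    refine Finset.sum_le_sum fun n _ => ?_
    refine (Real.rpow_le_rpow (abs_nonneg _) (hh_diff p n _ _ hj) (by linarith)).trans
      (le_of_eq ?_)
    have hm0 : 0 ≤ min 1 (2 ^ n * (y (j + 1) - y j)) := le_min zero_le_one (by positivity)
    rw [Real.mul_rpow (pow_pos (rr_pos p) n).le (by positivity), rr_pow p hp,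
      Real.mul_rpow (by positivity) hm0]
    ring
  refine (Finset.sum_le_sum h1).trans ?_
  rw [← Finset.mul_sum, Finset.sum_range_sub, hm]
  simp

def ff (p : ℝ) (x y : ℝ) : ℝ := ∑' n, gg n x * hh p n y

theorem term_le (p : ℝ) (n : ℕ) (x y : ℝ) : ‖gg n x * hh p n y‖ ≤ rr p ^ n := by
  rw [Real.norm_eq_abs, abs_mul, abs_of_nonneg (gg_nonneg n x)]
  exact (mul_le_of_le_one_left (abs_nonneg _) (gg_le_one n x)).trans (hh_abs p n y)

theorem rr_summable (p : ℝ) (hp : 1 < p) : Summable (fun n => rr p ^ n) :=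
  summable_geometric_of_lt_one (rr_pos p).le (rr_lt_one p hp)

theorem ff_hasSum (p : ℝ) (hp : 1 < p) (x y : ℝ) :
    HasSum (fun n => gg n x * hh p n y) (ff p x y) :=
  (Summable.of_norm_bounded (rr_summable p hp) fun n => term_le p n x y).hasSum

theorem ff_cont (p : ℝ) (hp : 1 < p) : Continuous (Function.uncurry (ff p)) := by
  refine continuous_tsum (fun n => ?_) (rr_summable p hp) (fun n z => term_le p n z.1 z.2)
  refine ((gg_cont n).comp continuous_fst).mul ?_
  unfold hh
  fun_prop

theorem hh_periodic (p : ℝ) (n : ℕ) (y : ℝ) : hh p n (y + 1) = hh p n y := by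
  unfold hh
  congr 1
  have : 2 * Real.pi * (2 ^ n * (y + 1)) =
      2 * Real.pi * (2 ^ n * y) + (2 ^ n : ℕ) * (2 * Real.pi) := by push_cast; ring
  rw [this, Real.cos_add_nat_mul_two_pi]

theorem ff_bip (p : ℝ) : BiPeriodic (ff p) := by
  constructor
  · intro x y; unfold ff; simp_rw [gg_periodic]
  · intro x y; unfold ff; simp_rw [hh_periodic]

theorem gg_diff_sum (N : ℕ) (x y : ℝ) : ∑ n ∈ Finset.range N, |gg n x - gg n y| ≤ 2 := by
  have h : ∑ n ∈ Finset.range N, |gg n x - gg n y| ≤ ∑ n ∈ Finset.range N, (gg n x + gg n y) := by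
    refine Finset.sum_le_sum fun n _ => ?_
    have h1 := gg_nonneg n x
    have h2 := gg_nonneg n y
    rw [abs_le]; constructor <;> linarith
  rw [Finset.sum_add_distrib] at h
  linarith [gg_sum N x, gg_sum N y]

theorem vp_lt_top (p : ℝ) (hp : 1 < p) (g : ℝ → ℝ) (C : ℝ)
    (h : ∀ (m : ℕ) (x : ℕ → ℝ), (∀ i < m, x i < x (i + 1)) → x m = x 0 + 1 →
      ∑ i ∈ Finset.range m, |g (x (i + 1)) - g (x i)| ^ p ≤ C) : vp p g < ⊤ := by
  refine lt_of_le_of_lt ?_ (ENNReal.ofReal_lt_top (r := C ^ (1 / p)))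
  unfold vp
  refine iSup_le fun m => iSup_le fun x => iSup_le fun hx => iSup_le fun hm => ?_
  refine ENNReal.ofReal_le_ofReal (Real.rpow_le_rpow ?_ (h m x hx hm) (by positivity))
  exact Finset.sum_nonneg fun _ _ => Real.rpow_nonneg (abs_nonneg _) _

theorem ff_vp2 (p : ℝ) (hp : 1 < p) : vp2 p (ff p) < ⊤ := by
  obtain ⟨C, hC⟩ := hh_var p hp
  refine lt_of_le_of_lt ?_ (ENNReal.ofReal_lt_top (r := (2 ^ (p - 1) * (2 * C)) ^ (1 / p)))
  unfold vp2
  refine iSup_le fun m => iSup_le fun k => iSup_le fun x => iSup_le fun y =>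
    iSup_le fun hx => iSup_le fun hm => iSup_le fun hy => iSup_le fun hk => ?_
  refine ENNReal.ofReal_le_ofReal (Real.rpow_le_rpow ?_ ?_ (by positivity))
  · exact Finset.sum_nonneg fun _ _ => Finset.sum_nonneg fun _ _ =>
      Real.rpow_nonneg (abs_nonneg _) _
  · refine key_limit p hp (Finset.range m) (Finset.range k)
      (fun i n => gg n (x (i + 1)) - gg n (x i)) (fun j n => hh p n (y (j + 1)) - hh p n (y j))
      2 C (fun i j => ff p (x (i + 1)) (y (j + 1)) - ff p (x (i + 1)) (y j)
        - ff p (x i) (y (j + 1)) + ff p (x i) (y j)) (by norm_num) ?_ ?_ ?_ ?_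
    · intro i j
      have := (((ff_hasSum p hp (x (i + 1)) (y (j + 1))).sub
        (ff_hasSum p hp (x (i + 1)) (y j))).sub (ff_hasSum p hp (x i) (y (j + 1)))).add
        (ff_hasSum p hp (x i) (y j))
      refine this.congr_fun ?_
      intro n; ring
    · intro N i _; exact gg_diff_sum N _ _
    · intro n; exact gg_var n m x hx hm
    · intro N; exact hC N k y hy hk

theorem ff_secx (p : ℝ) (hp : 1 < p) (x : ℝ) : vp p (fun y => ff p x y) < ⊤ := by
  obtain ⟨C, hC⟩ := hh_var p hp
  refine vp_lt_top p hp _ (2 ^ (p - 1) * (1 * C)) fun k y hy hk => ?_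
  have := key_limit p hp {0} (Finset.range k)
      (fun i n => gg n x) (fun j n => hh p n (y (j + 1)) - hh p n (y j))
      1 C (fun i j => ff p x (y (j + 1)) - ff p x (y j)) (by norm_num) ?_ ?_ ?_ ?_
  · simpa using this
  · intro i j
    refine ((ff_hasSum p hp x (y (j + 1))).sub (ff_hasSum p hp x (y j))).congr_fun ?_
    intro n; ring
  · intro N i _
    simp_rw [abs_of_nonneg (gg_nonneg _ x)]
    linarith [gg_sum N x]
  · intro n
    simp only [Finset.sum_singleton]
    rw [abs_of_nonneg (gg_nonneg _ x)]; exact gg_le_one n x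
  · intro N; exact hC N k y hy hk

theorem ff_secy (p : ℝ) (hp : 1 < p) (y : ℝ) : vp p (fun x => ff p x y) < ⊤ := by
  refine vp_lt_top p hp _ (2 ^ (p - 1) * (2 * 2)) fun m x hx hm => ?_
  have := key_limit p hp (Finset.range m) {0}
      (fun i n => gg n (x (i + 1)) - gg n (x i)) (fun j n => hh p n y)
      2 2 (fun i j => ff p (x (i + 1)) y - ff p (x i) y) (by norm_num) ?_ ?_ ?_ ?_
  · simpa using this
  · intro i j
    refine ((ff_hasSum p hp (x (i + 1)) y).sub (ff_hasSum p hp (x i) y)).congr_fun ?_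
    intro n; ring
  · intro N i _; exact gg_diff_sum N _ _
  · intro n; exact gg_var n m x hx hm
  · intro N
    simp only [Finset.sum_singleton]
    have : ∀ n ∈ Finset.range N, |hh p n y| ^ p ≤ (1 / 2 : ℝ) ^ n := by
      intro n _
      rw [← rr_pow p hp]
      exact Real.rpow_le_rpow (abs_nonneg _) (hh_abs p n y) (by linarith)
    exact (Finset.sum_le_sum this).trans (sum_geometric_two_le N)

theorem le_vp (p : ℝ) (g : ℝ → ℝ) (m : ℕ) (x : ℕ → ℝ) (hx : ∀ i < m, x i < x (i + 1))
    (hm : x m = x 0 + 1) :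
    ENNReal.ofReal ((∑ k ∈ Finset.range m, |g (x (k + 1)) - g (x k)| ^ p) ^ (1 / p)) ≤ vp p g := by
  unfold vp
  exact le_iSup_of_le m (le_iSup_of_le x (le_iSup_of_le hx (le_iSup_of_le hm le_rfl)))

theorem ff_zero (p : ℝ) (k : ℕ) (y : ℝ) : ff p (1 / 2 / 2 ^ k) y = 0 := by
  unfold ff; simp_rw [gg_zero]; simp

theorem ff_peak (p : ℝ) (k : ℕ) (y : ℝ) : ff p (3 / 4 / 2 ^ k) y = hh p k y := by
  unfold ff; simp_rw [gg_peak]; simp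

def PP (p x : ℝ) : ℝ := (vp p (fun y => ff p x y)).toReal

theorem PP_zero (p : ℝ) (hp : 1 < p) (k : ℕ) : PP p (1 / 2 / 2 ^ k) = 0 := by
  unfold PP
  simp_rw [ff_zero]
  have hp0 : p ≠ 0 := by linarith
  simp [vp, Real.zero_rpow hp0, Real.zero_rpow (inv_ne_zero hp0)]

theorem PP_peak (p : ℝ) (hp : 1 < p) (k : ℕ) : 1 ≤ PP p (3 / 4 / 2 ^ k) := by
  unfold PP
  rw [← ENNReal.ofReal_le_iff_le_toReal (ff_secx p hp _).ne]
  simp_rw [ff_peak]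
  refine le_trans ?_ (le_vp p _ (2 * 2 ^ k) (fun i => i / (2 * 2 ^ k)) ?_ ?_)
  · apply ENNReal.ofReal_le_ofReal
    apply Real.one_le_rpow _ (by positivity)
    have : ∀ i : ℕ, |hh p k (((i + 1 : ℕ) : ℝ) / (2 * 2 ^ k)) - hh p k (i / (2 * 2 ^ k))| ^ p
        = (1 / 2) ^ k * 2 ^ p := by
      intro i
      have e : ∀ i : ℕ, hh p k (i / (2 * 2 ^ k)) = rr p ^ k * (-1) ^ i := by
        intro i
        rw [hh, ← Real.cos_nat_mul_pi]; congr 2; field_simp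
      rw [e, e, ← rr_pow p hp, ← Real.mul_rpow (pow_pos (rr_pos p) k).le (by norm_num)]
      congr 1
      rw [← mul_sub, abs_mul, abs_of_pos (pow_pos (rr_pos p) k)]
      congr 1
      rw [pow_succ, show (-1 : ℝ) ^ i * -1 - (-1) ^ i = (-1) ^ i * (-2) by ring, abs_mul]
      simp
    simp_rw [this]
    rw [Finset.sum_const, Finset.card_range, nsmul_eq_mul]
    push_cast
    have e : (2 : ℝ) * 2 ^ k * ((1 / 2) ^ k * 2 ^ p) = 2 * 2 ^ p := by
      rw [one_div, inv_pow]; field_simp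
    rw [e]
    have : (1 : ℝ) ≤ 2 ^ p := Real.one_le_rpow (by norm_num) (by linarith)
    linarith
  · intro i _
    push_cast
    gcongr
    linarith
  · push_cast; field_simp; simp

theorem PP_vp (p : ℝ) (hp : 1 < p) : ¬ vp p (PP p) < ⊤ := by
  intro hlt
  have key : ∀ N : ℕ, ENNReal.ofReal ((2 * N + 1 : ℝ) ^ (1 / p)) ≤ vp p (PP p) := by
    intro N
    set x : ℕ → ℝ := fun i => if i = 2 * N + 2 then 1 / 2 / 2 ^ N + 1 else
      (if i % 2 = 0 then 1 / 2 else 3 / 4) / 2 ^ (N - i / 2) with hx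
    have x0 : ∀ l ≤ N, x (2 * l) = 1 / 2 / 2 ^ (N - l) := by
      intro l hl
      simp only [hx]
      rw [if_neg (by omega), if_pos (by omega), show 2 * l / 2 = l by omega]
    have x1 : ∀ l ≤ N, x (2 * l + 1) = 3 / 4 / 2 ^ (N - l) := by
      intro l hl
      simp only [hx]
      rw [if_neg (by omega), if_neg (by omega), show (2 * l + 1) / 2 = l by omega]
    have xe : x (2 * N + 2) = 1 / 2 / 2 ^ N + 1 := by simp [hx]
    refine le_trans ?_ (le_vp p _ (2 * N + 2) x ?_ ?_)
    · apply ENNReal.ofReal_le_ofReal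
      refine Real.rpow_le_rpow (by positivity) ?_ (by positivity)
      rw [show 2 * N + 2 = (2 * N + 1) + 1 by ring, Finset.sum_range_succ]
      have h1 : ∀ i ∈ Finset.range (2 * N + 1), (1 : ℝ) ≤ |PP p (x (i + 1)) - PP p (x i)| ^ p := by
        intro i hi
        have hi := Finset.mem_range.1 hi
        apply Real.one_le_rpow _ (by linarith)
        obtain ⟨l, rfl | rfl⟩ := Nat.even_or_odd' i
        · rw [x0 l (by omega), x1 l (by omega), PP_zero p hp, sub_zero]
          exact (PP_peak p hp _).trans (le_abs_self _)
        · rw [show 2 * l + 1 + 1 = 2 * (l + 1) by ring, x0 (l + 1) (by omega), x1 l (by omega),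
            PP_zero p hp, zero_sub, abs_neg]
          exact (PP_peak p hp _).trans (le_abs_self _)
      have h2 := Finset.sum_le_sum h1
      simp only [Finset.sum_const, Finset.card_range, nsmul_eq_mul, mul_one] at h2
      push_cast at h2
      have h3 : 0 ≤ |PP p (x (2 * N + 1 + 1)) - PP p (x (2 * N + 1))| ^ p :=
        Real.rpow_nonneg (abs_nonneg _) _
      linarith
    · intro i hi
      obtain ⟨l, rfl | rfl⟩ := Nat.even_or_odd' i
      · rw [x0 l (by omega), x1 l (by omega)]
        exact div_lt_div_of_pos_right (by norm_num) (by positivity)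
      · rw [x1 l (by omega)]
        rcases (show l ≤ N by omega).eq_or_lt with h | h
        · subst h
          rw [show 2 * l + 1 + 1 = 2 * l + 2 by ring, xe, Nat.sub_self]
          have : (0 : ℝ) < 1 / 2 / 2 ^ l := by positivity
          linarith
        · rw [show 2 * l + 1 + 1 = 2 * (l + 1) by ring, x0 (l + 1) (by omega),
            show N - l = (N - (l + 1)) + 1 by omega, pow_succ]
          rw [div_lt_div_iff₀ (by positivity) (by positivity)]
          have : (0 : ℝ) < 2 ^ (N - (l + 1)) := by positivity
          linarith
    · rw [xe]
      have := x0 0 (by omega)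
      simp only [mul_zero, Nat.sub_zero] at this
      rw [this]
  have hp0 : 0 < 1 / p := by positivity
  have ht : Tendsto (fun N : ℕ => (2 * N + 1 : ℝ) ^ (1 / p)) atTop atTop := by
    refine (tendsto_rpow_atTop hp0).comp ?_
    refine tendsto_atTop_mono (fun N : ℕ => ?_) tendsto_natCast_atTop_atTop
    have : (0 : ℝ) ≤ N := Nat.cast_nonneg N
    linarith
  obtain ⟨N, hN⟩ := (ht.eventually_gt_atTop (vp p (PP p)).toReal).exists
  have := key N
  rw [ENNReal.ofReal_le_iff_le_toReal hlt.ne] at this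
  linarith

end

/-- For every `1 < p < ∞` there is a continuous biperiodic `f` with
`f ∈ H_p⁽²⁾` but `f ∉ V_p[V_p]`; hence `H_p⁽²⁾ ⊄ V_p[V_p]`. -/
theorem statement17 (p : ℝ) (hp : 1 < p) :
    ∃ f : ℝ → ℝ → ℝ, Continuous (Function.uncurry f) ∧ BiPeriodic f ∧
      MemHp2 p f ∧ ¬ MemVpVp p f := by
  refine ⟨ff p, ff_cont p hp, ff_bip p, ⟨ff_vp2 p hp, ff_secx p hp, ff_secy p hp⟩, ?_⟩
  rintro ⟨_, _, h, _⟩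
  exact PP_vp p hp h
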